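/- Let f_n : ℝ → ℝ be convex functions converging pointwise on ℝ to a function f : ℝ → ℝ. Let x₀ ∈ ℝ, suppose each f_n is differentiable at x₀ with derivative d_n, and suppose f is differentiable at x₀ with derivative d. Then d_n → d as n → ∞. -/

import Mathlib

/-!
The subgradient inequality at `x₀` bounds `d n` below by every left secant slope of `f n` at `x₀`
and above by every right one. For a fixed secant these slopes converge to the secant slope of `g`,
so `liminf d n` and `limsup d n` lie between the left and the right secant slopes of `g`; shrinking
the secants squeezes both bounds to the derivative `d₀` of `g` at `x₀`.
-/

open Filter Set Topology

section IteratedLimit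

variable {ι α β : Type*} [LinearOrder β] [TopologicalSpace β] {l : Filter ι} {d : ι → β} {L : β}

lemma eventually_lt_of_tendsto_of_tendsto_of_le [ClosedIicTopology β] {p : Filter α} [p.NeBot]
    {u : α → ι → β} {v : α → β} (hu : ∀ᶠ y in p, Tendsto (u y) l (𝓝 (v y)))
    (hv : Tendsto v p (𝓝 L)) (hle : ∀ᶠ y in p, ∀ᶠ i in l, u y i ≤ d i) {a : β} (ha : a < L) :
    ∀ᶠ i in l, a < d i := by
  obtain ⟨y, huy, hay, hley⟩ := (hu.and ((hv.eventually_const_lt ha).and hle)).exists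
  filter_upwards [huy.eventually_const_lt hay, hley] with i hlt hle
  exact hlt.trans_le hle

lemma tendsto_of_iterated_squeeze [OrderTopology β] {p q : Filter α} [p.NeBot] [q.NeBot]
    {u : α → ι → β} {v : α → β} (hup : ∀ᶠ y in p, Tendsto (u y) l (𝓝 (v y)))
    (huq : ∀ᶠ y in q, Tendsto (u y) l (𝓝 (v y))) (hvp : Tendsto v p (𝓝 L))
    (hvq : Tendsto v q (𝓝 L)) (hle : ∀ᶠ y in p, ∀ᶠ i in l, u y i ≤ d i)
    (hge : ∀ᶠ y in q, ∀ᶠ i in l, d i ≤ u y i) :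
    Tendsto d l (𝓝 L) :=
  tendsto_order.2
    ⟨fun _ ha ↦ eventually_lt_of_tendsto_of_tendsto_of_le hup hvp hle ha,
      fun _ ha ↦ eventually_lt_of_tendsto_of_tendsto_of_le (β := βᵒᵈ) huq hvq hge ha⟩

end IteratedLimit

lemma tendsto_slope_of_tendsto {ι 𝕜 E P : Type*} [Field 𝕜] [AddCommGroup E] [Module 𝕜 E]
    [TopologicalSpace E] [ContinuousConstSMul 𝕜 E] [AddTorsor E P] [TopologicalSpace P]
    [IsTopologicalAddTorsor P] {l : Filter ι} {f : ι → 𝕜 → P} {g : 𝕜 → P} {x y : 𝕜}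
    (hx : Tendsto (f · x) l (𝓝 (g x))) (hy : Tendsto (f · y) l (𝓝 (g y))) :
    Tendsto (fun i ↦ slope (f i) x y) l (𝓝 (slope g x y)) :=
  (hy.vsub hx).const_smul _

section Slope

variable {𝕜 : Type*} [Field 𝕜] [LinearOrder 𝕜] [IsStrictOrderedRing 𝕜] {f : 𝕜 → 𝕜} {x y d : 𝕜}

lemma le_slope_iff_of_lt (hxy : x < y) : d ≤ slope f x y ↔ f x + d * (y - x) ≤ f y := by
  rw [slope_def_field, le_div_iff₀ (sub_pos.2 hxy), le_sub_iff_add_le']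

lemma slope_le_iff_of_gt (hyx : y < x) : slope f x y ≤ d ↔ f x + d * (y - x) ≤ f y := by
  rw [slope_def_field, div_le_iff_of_neg (sub_neg.2 hyx), le_sub_iff_add_le']

end Slope

lemma tangent_le_of_convexOn {S : Set ℝ} {f : ℝ → ℝ} {x y d : ℝ} (hf : ConvexOn ℝ S f)
    (hx : x ∈ S) (hy : y ∈ S) (hd : HasDerivWithinAt f d S x) :
    f x + d * (y - x) ≤ f y := by
  rcases lt_trichotomy y x with hyx | rfl | hxy
  · rw [← slope_le_iff_of_gt hyx, slope_comm]
    exact hf.slope_le_of_hasDerivWithinAt hy hx hyx hd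
  · simp
  · exact (le_slope_iff_of_lt hxy).1 (hf.le_slope_of_hasDerivWithinAt hx hy hxy hd)

theorem tendsto_deriv_of_convex_pointwise_general {ι : Type*} {l : Filter ι} {f : ι → ℝ → ℝ}
    {g : ℝ → ℝ} {x₀ : ℝ} {d : ι → ℝ} {d₀ : ℝ}
    (hpt : ∀ᶠ y in 𝓝 x₀, Tendsto (f · y) l (𝓝 (g y)))
    (hd : ∀ᶠ y in 𝓝 x₀, ∀ᶠ i in l, f i x₀ + d i * (y - x₀) ≤ f i y)
    (hg : HasDerivAt g d₀ x₀) :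
    Tendsto d l (𝓝 d₀) := by
  have hslope : ∀ᶠ y in 𝓝 x₀, Tendsto (fun i ↦ slope (f i) x₀ y) l (𝓝 (slope g x₀ y)) :=
    hpt.mono fun _ hy ↦ tendsto_slope_of_tendsto hpt.self_of_nhds hy
  have hleft : ∀ᶠ y in 𝓝[<] x₀, ∀ᶠ i in l, slope (f i) x₀ y ≤ d i := by
    filter_upwards [hd.filter_mono nhdsWithin_le_nhds, self_mem_nhdsWithin] with y hdy hy
    exact hdy.mono fun i ↦ (slope_le_iff_of_gt hy).2
  have hright : ∀ᶠ y in 𝓝[>] x₀, ∀ᶠ i in l, d i ≤ slope (f i) x₀ y := by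
    filter_upwards [hd.filter_mono nhdsWithin_le_nhds, self_mem_nhdsWithin] with y hdy hy
    exact hdy.mono fun i ↦ (le_slope_iff_of_lt hy).2
  obtain ⟨hgleft, hgright⟩ := hasDerivAt_iff_tendsto_slope_left_right.1 hg
  exact tendsto_of_iterated_squeeze (hslope.filter_mono nhdsWithin_le_nhds)
    (hslope.filter_mono nhdsWithin_le_nhds) hgleft hgright hleft hright

/-- Convergence of derivatives of convex functions at a point of differentiability
of the pointwise limit (Rockafellar). -/
theorem tendsto_deriv_of_convex_pointwise (f : ℕ → ℝ → ℝ)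
    (hconv : ∀ n, ConvexOn ℝ Set.univ (f n)) (g : ℝ → ℝ)
    (hpt : ∀ x : ℝ, Filter.Tendsto (fun n => f n x) Filter.atTop (nhds (g x)))
    (x₀ : ℝ) (d : ℕ → ℝ) (hd : ∀ n, HasDerivAt (f n) (d n) x₀)
    (d₀ : ℝ) (hg : HasDerivAt g d₀ x₀) :
    Filter.Tendsto d Filter.atTop (nhds d₀) :=
  tendsto_deriv_of_convex_pointwise_general (.of_forall hpt) (.of_forall fun y ↦ .of_forall fun n ↦
    tangent_le_of_convexOn (hconv n) (mem_univ x₀) (mem_univ y) (hd n).hasDerivWithinAt) hg
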